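/- arXiv:1406.6266 — 9 statements merged into one kernel-verified Lean document; each statement's English description precedes it below -/
import Mathlib

section
/- Let k ∈ ℕ and let K, K' be Kripke models over Φ with teams T, T' such that K,T ⇌ₖ K',T'. Then for all T₁,T₂ ⊆ T with T = T₁ ∪ T₂ there exist T'₁,T'₂ ⊆ T' such that T' = T'₁ ∪ T'₂ and K,Tᵢ ⇌ₖ K',T'ᵢ for i ∈ {1,2}. -/
namespace MDLTeam

/-- A Kripke model over a set `Φ` of proposition symbols: a set `W` of worlds,
an accessibility relation `R` and a valuation `V`.  A team of `K` is a subset of `K.W`. -/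
structure Kripke (Φ : Type) : Type 1 where
  W : Type
  R : W → W → Prop
  V : Φ → Set W

namespace Kripke

variable {Φ : Type}

/-- `R[T] = {v | ∃ w ∈ T, w R v}` -/
def img (K : Kripke Φ) (T : Set K.W) : Set K.W := {v | ∃ w ∈ T, K.R w v}

/-- `R⁻¹[S] = {w | ∃ v ∈ S, w R v}` -/
def pre (K : Kripke Φ) (S : Set K.W) : Set K.W := {w | ∃ v ∈ S, K.R w v}

/-- `T[R]S` iff `S ⊆ R[T]` and `T ⊆ R⁻¹[S]`. -/
def trs (K : Kripke Φ) (T S : Set K.W) : Prop := S ⊆ K.img T ∧ T ⊆ K.pre S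

end Kripke

/-- Formulas of modal logic `ML(Φ)` in negation normal form. -/
inductive MLFrm (Φ : Type) : Type
  | atom (p : Φ)
  | natom (p : Φ)
  | and (φ ψ : MLFrm Φ)
  | or (φ ψ : MLFrm Φ)
  | dia (φ : MLFrm Φ)
  | box (φ : MLFrm Φ)
  deriving DecidableEq

namespace MLFrm

variable {Φ : Type}

/-- Team semantics for `ML`. -/
def sat (K : Kripke Φ) : MLFrm Φ → Set K.W → Prop
  | atom p, T => T ⊆ K.V p
  | natom p, T => T ∩ K.V p = ∅
  | and φ ψ, T => sat K φ T ∧ sat K ψ T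
  | or φ ψ, T => ∃ T₁ T₂, T = T₁ ∪ T₂ ∧ sat K φ T₁ ∧ sat K ψ T₂
  | dia φ, T => ∃ S, K.trs T S ∧ sat K φ S
  | box φ, T => sat K φ (K.img T)

/-- Standard (pointwise) Kripke semantics for `ML`. -/
def psat (K : Kripke Φ) : MLFrm Φ → K.W → Prop
  | atom p, w => w ∈ K.V p
  | natom p, w => w ∉ K.V p
  | and φ ψ, w => psat K φ w ∧ psat K ψ w
  | or φ ψ, w => psat K φ w ∨ psat K ψ w
  | dia φ, w => ∃ v, K.R w v ∧ psat K φ v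
  | box φ, w => ∀ v, K.R w v → psat K φ v

/-- Modal depth. -/
def md : MLFrm Φ → ℕ
  | atom _ => 0
  | natom _ => 0
  | and φ ψ => max (md φ) (md ψ)
  | or φ ψ => max (md φ) (md ψ)
  | dia φ => md φ + 1
  | box φ => md φ + 1

end MLFrm

/-- Formulas of `ML(⊻)(Φ)`: modal logic with intuitionistic disjunction. -/
inductive MLI (Φ : Type) : Type
  | atom (p : Φ)
  | natom (p : Φ)
  | and (φ ψ : MLI Φ)
  | or (φ ψ : MLI Φ)
  | dia (φ : MLI Φ)
  | box (φ : MLI Φ)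
  | idis (φ ψ : MLI Φ)
  deriving DecidableEq

namespace MLI

variable {Φ : Type}

/-- Team semantics for `ML(⊻)`. -/
def sat (K : Kripke Φ) : MLI Φ → Set K.W → Prop
  | atom p, T => T ⊆ K.V p
  | natom p, T => T ∩ K.V p = ∅
  | and φ ψ, T => sat K φ T ∧ sat K ψ T
  | or φ ψ, T => ∃ T₁ T₂, T = T₁ ∪ T₂ ∧ sat K φ T₁ ∧ sat K ψ T₂
  | dia φ, T => ∃ S, K.trs T S ∧ sat K φ S
  | box φ, T => sat K φ (K.img T)
  | idis φ ψ, T => sat K φ T ∨ sat K ψ T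

/-- Modal depth. -/
def md : MLI Φ → ℕ
  | atom _ => 0
  | natom _ => 0
  | and φ ψ => max (md φ) (md ψ)
  | or φ ψ => max (md φ) (md ψ)
  | dia φ => md φ + 1
  | box φ => md φ + 1
  | idis φ ψ => max (md φ) (md ψ)

/-- The number of occurrences of the connective `⊻` in a formula. -/
def occIdis : MLI Φ → ℕ
  | atom _ => 0
  | natom _ => 0
  | and φ ψ => occIdis φ + occIdis ψ
  | or φ ψ => occIdis φ + occIdis ψ
  | dia φ => occIdis φ
  | box φ => occIdis φ
  | idis φ ψ => occIdis φ + occIdis ψ + 1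

/-- The number of symbols in a formula. -/
def size : MLI Φ → ℕ
  | atom _ => 1
  | natom _ => 2
  | and φ ψ => size φ + size ψ + 1
  | or φ ψ => size φ + size ψ + 1
  | dia φ => size φ + 1
  | box φ => size φ + 1
  | idis φ ψ => size φ + size ψ + 1

end MLI

/-- Formulas of extended modal dependence logic `EMDL(Φ)`: `ML` extended by
dependence atoms `dep(ψ₁,…,ψₙ,θ)` with `ψ₁,…,ψₙ,θ ∈ ML(Φ)`. -/
inductive EMDL (Φ : Type) : Type
  | atom (p : Φ)
  | natom (p : Φ)
  | and (φ ψ : EMDL Φ)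
  | or (φ ψ : EMDL Φ)
  | dia (φ : EMDL Φ)
  | box (φ : EMDL Φ)
  | dep (l : List (MLFrm Φ)) (θ : MLFrm Φ)

namespace EMDL

variable {Φ : Type}

/-- Team semantics for `EMDL`. -/
def sat (K : Kripke Φ) : EMDL Φ → Set K.W → Prop
  | atom p, T => T ⊆ K.V p
  | natom p, T => T ∩ K.V p = ∅
  | and φ ψ, T => sat K φ T ∧ sat K ψ T
  | or φ ψ, T => ∃ T₁ T₂, T = T₁ ∪ T₂ ∧ sat K φ T₁ ∧ sat K ψ T₂
  | dia φ, T => ∃ S, K.trs T S ∧ sat K φ S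
  | box φ, T => sat K φ (K.img T)
  | dep l θ, T => ∀ w ∈ T, ∀ v ∈ T,
      (∀ ψ ∈ l, (MLFrm.sat K ψ {w} ↔ MLFrm.sat K ψ {v})) →
      (MLFrm.sat K θ {w} ↔ MLFrm.sat K θ {v})

end EMDL

/-- `k`-bisimilarity of pointed models. -/
def bisim {Φ : Type} (K K' : Kripke Φ) : ℕ → K.W → K'.W → Prop
  | 0, w, w' => ∀ p, w ∈ K.V p ↔ w' ∈ K'.V p
  | k + 1, w, w' =>
      (∀ p, w ∈ K.V p ↔ w' ∈ K'.V p) ∧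
      (∀ v, K.R w v → ∃ v', K'.R w' v' ∧ bisim K K' k v v') ∧
      (∀ v', K'.R w' v' → ∃ v, K.R w v ∧ bisim K K' k v v')

/-- Team `k`-bisimilarity: `K,T ⇌ₖ K',T'`. -/
def tbisim {Φ : Type} (K K' : Kripke Φ) (k : ℕ) (T : Set K.W) (T' : Set K'.W) : Prop :=
  (∀ w ∈ T, ∃ w' ∈ T', bisim K K' k w w') ∧
  (∀ w' ∈ T', ∃ w ∈ T, bisim K K' k w w')

/-- `M(φ,K)`: the set of maximal teams satisfying `φ` in `K` (for `ML(⊻)`). -/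
def MLI.Mset {Φ : Type} (K : Kripke Φ) (φ : MLI Φ) : Set (Set K.W) :=
  {T | MLI.sat K φ T ∧ ∀ S, MLI.sat K φ S → T ⊆ S → S = T}

/-- `N(φ,K)`: the family of minimal teams not satisfying `φ` in `K` (for `ML(⊻)`). -/
def MLI.Nset {Φ : Type} (K : Kripke Φ) (φ : MLI Φ) : Set (Set K.W) :=
  {T | ¬ MLI.sat K φ T ∧ ∀ S, ¬ MLI.sat K φ S → S ⊆ T → S = T}

/-- The upper dimension `Dim(φ)` of an `ML(⊻)`-formula: the least `m` such that
`|M(φ,K)| ≤ m` for every Kripke model `K` over `Φ`. -/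
noncomputable def MLI.Dim {Φ : Type} (φ : MLI Φ) : ℕ :=
  sInf {m : ℕ | ∀ K : Kripke Φ, (MLI.Mset K φ).Finite ∧ (MLI.Mset K φ).ncard ≤ m}

/-- The lower dimension `dim(φ)` of an `ML(⊻)`-formula: the least `n` such that
`|T| ≤ n` for every Kripke model `K` over `Φ` and every `T ∈ N(φ,K)`. -/
noncomputable def MLI.ldim {Φ : Type} (φ : MLI Φ) : ℕ :=
  sInf {n : ℕ | ∀ K : Kripke Φ, ∀ T ∈ MLI.Nset K φ, T.Finite ∧ T.ncard ≤ n}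

/-- `M(φ,K)`: the set of maximal teams satisfying `φ` in `K` (for `EMDL`). -/
def EMDL.Mset {Φ : Type} (K : Kripke Φ) (φ : EMDL Φ) : Set (Set K.W) :=
  {T | EMDL.sat K φ T ∧ ∀ S, EMDL.sat K φ S → T ⊆ S → S = T}

/-- The upper dimension `Dim(φ)` of an `EMDL`-formula. -/
noncomputable def EMDL.Dim {Φ : Type} (φ : EMDL Φ) : ℕ :=
  sInf {m : ℕ | ∀ K : Kripke Φ, (EMDL.Mset K φ).Finite ∧ (EMDL.Mset K φ).ncard ≤ m}

/-- The `Ψ`-type of a state: `type_Ψ(K,w) = {ψ ∈ Ψ | K,w ⊨ ψ}`. -/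
def typeSet {Φ : Type} (K : Kripke Φ) (Ψ : Set (MLFrm Φ)) (w : K.W) : Set (MLFrm Φ) :=
  {ψ | ψ ∈ Ψ ∧ MLFrm.psat K ψ w}

/-- `tset_Ψ(K,T) = {type_Ψ(K,w) | w ∈ T}`. -/
def tset {Φ : Type} (K : Kripke Φ) (Ψ : Set (MLFrm Φ)) (T : Set K.W) : Set (Set (MLFrm Φ)) :=
  typeSet K Ψ '' T


/-- If `K,T ⇌ₖ K',T'`, then every splitting `T = T₁ ∪ T₂` of `T` can be matched
by a splitting `T' = T'₁ ∪ T'₂` of `T'` with `K,Tᵢ ⇌ₖ K',T'ᵢ` for `i ∈ {1,2}`. -/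
theorem tbisim_split {Φ : Type} (k : ℕ) (K K' : Kripke Φ)
    (T : Set K.W) (T' : Set K'.W) (h : tbisim K K' k T T') :
    ∀ T₁ T₂ : Set K.W, T₁ ⊆ T → T₂ ⊆ T → T = T₁ ∪ T₂ →
      ∃ T₁' T₂' : Set K'.W, T₁' ⊆ T' ∧ T₂' ⊆ T' ∧ T' = T₁' ∪ T₂' ∧
        tbisim K K' k T₁ T₁' ∧ tbisim K K' k T₂ T₂' := by
  intro T₁ T₂ h₁ h₂ hT
  refine ⟨{w' | w' ∈ T' ∧ ∃ w ∈ T₁, bisim K K' k w w'},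
    {w' | w' ∈ T' ∧ ∃ w ∈ T₂, bisim K K' k w w'},
    fun _ hx => hx.1, fun _ hx => hx.1, ?_, ⟨?_, fun _ hx => hx.2⟩, ⟨?_, fun _ hx => hx.2⟩⟩
  · ext w'
    constructor
    · intro hw'
      obtain ⟨w, hw, hb⟩ := h.2 w' hw'
      rw [hT] at hw
      rcases hw with hw | hw
      · exact Or.inl ⟨hw', w, hw, hb⟩
      · exact Or.inr ⟨hw', w, hw, hb⟩
    · rintro (hx | hx)
      · exact hx.1
      · exact hx.1
  · intro w hw
    obtain ⟨w', hw', hb⟩ := h.1 w (h₁ hw)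
    exact ⟨w', ⟨hw', w, hw, hb⟩, hb⟩
  · intro w hw
    obtain ⟨w', hw', hb⟩ := h.1 w (h₂ hw)
    exact ⟨w', ⟨hw', w, hw, hb⟩, hb⟩

end MDLTeam
end

section
/- For every formula φ of ML(⊻)(Φ), the class ‖φ‖ is closed under team md(φ)-bisimulation: if K,T ⊨ φ and K,T ⇌_{md(φ)} K',T', then K',T' ⊨ φ. -/
namespace MDLTeam

theorem bisim_pred {Φ : Type} (K K' : Kripke Φ) (k : ℕ) :
    ∀ w w', bisim K K' (k + 1) w w' → bisim K K' k w w' := by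
  induction k with
  | zero => intro w w' h; exact h.1
  | succ k ih =>
    intro w w' h
    obtain ⟨h0, h1, h2⟩ := h
    refine ⟨h0, fun v hv => ?_, fun v' hv' => ?_⟩
    · obtain ⟨v', hr, hb⟩ := h1 v hv
      exact ⟨v', hr, ih _ _ hb⟩
    · obtain ⟨v, hr, hb⟩ := h2 v' hv'
      exact ⟨v, hr, ih _ _ hb⟩

theorem bisim_atoms {Φ : Type} {K K' : Kripke Φ} {k : ℕ} {w : K.W} {w' : K'.W}
    (h : bisim K K' k w w') (p : Φ) : w ∈ K.V p ↔ w' ∈ K'.V p := by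
  cases k with
  | zero => exact h p
  | succ k => exact h.1 p

theorem tbisim_mono {Φ : Type} {K K' : Kripke Φ} {k l : ℕ} (hkl : k ≤ l)
    {T : Set K.W} {T' : Set K'.W} (h : tbisim K K' l T T') : tbisim K K' k T T' := by
  have key : ∀ w w', bisim K K' l w w' → bisim K K' k w w' := by
    induction hkl with
    | refl => exact fun _ _ h => h
    | step _ ih =>
      have h' : tbisim K K' _ T T' :=
        ⟨fun w hw => let ⟨w', a, b⟩ := h.1 w hw; ⟨w', a, bisim_pred K K' _ _ _ b⟩,
         fun w' hw => let ⟨w, a, b⟩ := h.2 w' hw; ⟨w, a, bisim_pred K K' _ _ _ b⟩⟩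
      exact fun w w' hb => ih h' w w' (bisim_pred K K' _ _ _ hb)
  exact ⟨fun w hw => let ⟨w', a, b⟩ := h.1 w hw; ⟨w', a, key _ _ b⟩,
    fun w' hw => let ⟨w, a, b⟩ := h.2 w' hw; ⟨w, a, key _ _ b⟩⟩

/-- The part of `T'` that is `k`-bisimilar to a subteam `S` of `T`. -/
theorem tbisim_restrict {Φ : Type} {K K' : Kripke Φ} {k : ℕ}
    {T S : Set K.W} {T' : Set K'.W} (h : tbisim K K' k T T') (hS : S ⊆ T) :
    tbisim K K' k S {w' | w' ∈ T' ∧ ∃ w ∈ S, bisim K K' k w w'} :=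
  ⟨fun w hw => let ⟨w', a, b⟩ := h.1 w (hS hw); ⟨w', ⟨a, w, hw, b⟩, b⟩,
   fun _ hw => hw.2⟩

theorem tbisim_img {Φ : Type} {K K' : Kripke Φ} {k : ℕ}
    {T : Set K.W} {T' : Set K'.W} (h : tbisim K K' (k + 1) T T') :
    tbisim K K' k (K.img T) (K'.img T') := by
  constructor
  · rintro v ⟨w, hw, hr⟩
    obtain ⟨w', hw', hb⟩ := h.1 w hw
    obtain ⟨v', hr', hb'⟩ := hb.2.1 v hr
    exact ⟨v', ⟨w', hw', hr'⟩, hb'⟩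
  · rintro v' ⟨w', hw', hr'⟩
    obtain ⟨w, hw, hb⟩ := h.2 w' hw'
    obtain ⟨v, hr, hb'⟩ := hb.2.2 v' hr'
    exact ⟨v, ⟨w, hw, hr⟩, hb'⟩

/-- For every `φ ∈ ML(⊻)(Φ)`, the class `‖φ‖` is closed under team
`md(φ)`-bisimulation. -/
theorem mli_bisim_invariance {Φ : Type} (φ : MLI Φ) (K K' : Kripke Φ)
    (T : Set K.W) (T' : Set K'.W)
    (hsat : MLI.sat K φ T) (hbis : tbisim K K' (MLI.md φ) T T') :
    MLI.sat K' φ T' := by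
  induction φ generalizing T T' with
  | atom p =>
    intro w' hw'
    obtain ⟨w, hw, hb⟩ := hbis.2 w' hw'
    exact (bisim_atoms hb p).1 (hsat hw)
  | natom p =>
    apply Set.eq_empty_of_forall_notMem
    rintro w' ⟨hw', hp⟩
    obtain ⟨w, hw, hb⟩ := hbis.2 w' hw'
    have hmem : w ∈ T ∩ K.V p := ⟨hw, (bisim_atoms hb p).2 hp⟩
    rw [show T ∩ K.V p = ∅ from hsat] at hmem
    exact hmem
  | and φ ψ ihφ ihψ =>
    exact ⟨ihφ T T' hsat.1 (tbisim_mono (le_max_left _ _) hbis),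
      ihψ T T' hsat.2 (tbisim_mono (le_max_right _ _) hbis)⟩
  | or φ ψ ihφ ihψ =>
    obtain ⟨T₁, T₂, rfl, h1, h2⟩ := hsat
    refine ⟨_, _, ?_,
      ihφ _ _ h1 (tbisim_mono (le_max_left _ _)
        (tbisim_restrict hbis Set.subset_union_left)),
      ihψ _ _ h2 (tbisim_mono (le_max_right _ _)
        (tbisim_restrict hbis Set.subset_union_right))⟩
    ext w'
    constructor
    · intro hw'
      obtain ⟨w, hw | hw, hb⟩ := hbis.2 w' hw'
      · exact Or.inl ⟨hw', w, hw, hb⟩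
      · exact Or.inr ⟨hw', w, hw, hb⟩
    · rintro (h | h)
      · exact h.1
      · exact h.1
  | dia φ ih =>
    obtain ⟨S, ⟨hS1, hS2⟩, hs⟩ := hsat
    refine ⟨_, ⟨?_, ?_⟩, ih _ _ hs (tbisim_restrict (tbisim_img hbis) hS1)⟩
    · exact fun _ h => h.1
    · intro w' hw'
      obtain ⟨w, hw, hb⟩ := hbis.2 w' hw'
      obtain ⟨v, hv, hr⟩ := hS2 hw
      obtain ⟨v', hr', hb'⟩ := hb.2.1 v hr
      exact ⟨v', ⟨⟨w', hw', hr'⟩, v, hv, hb'⟩, hr'⟩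
  | box φ ih => exact ih _ _ hsat (tbisim_img hbis)
  | idis φ ψ ihφ ihψ =>
    rcases hsat with h | h
    · exact Or.inl (ihφ T T' h (tbisim_mono (le_max_left _ _) hbis))
    · exact Or.inr (ihψ T T' h (tbisim_mono (le_max_right _ _) hbis))

end MDLTeam
end

section
/- Let Ψ be a finite set of ML(Φ)-formulas, let p ∈ Φ, and define the EMDL(Φ)-formulas γ := ⋀_{ψ∈Ψ} dep(ψ), γ⁰ := p ∧ ¬p, and γᵏ⁺¹ := (γᵏ ∨ γ). Then for every k ∈ ℕ, every Kripke model K over Φ, and every team T of K: K,T ⊨ γᵏ if and only if |tset_Ψ(K,T)| ≤ k. -/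
namespace MDLTeam

/-- `γ := ⋀_{ψ∈Ψ} dep(ψ)` (the empty conjunction being the tautology `p ∨ ¬p`). -/
noncomputable def gammaFrm {Φ : Type} (p : Φ) (Ψ : Set (MLFrm Φ)) (hΨ : Ψ.Finite) : EMDL Φ :=
  (hΨ.toFinset.toList.map fun ψ => EMDL.dep [] ψ).foldr EMDL.and
    (EMDL.or (EMDL.atom p) (EMDL.natom p))

/-- `γ⁰ := p ∧ ¬p` and `γᵏ⁺¹ := (γᵏ ∨ γ)`. -/
noncomputable def gammaPow {Φ : Type} (p : Φ) (Ψ : Set (MLFrm Φ)) (hΨ : Ψ.Finite) : ℕ → EMDL Φ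
  | 0 => EMDL.and (EMDL.atom p) (EMDL.natom p)
  | k + 1 => EMDL.or (gammaPow p Ψ hΨ k) (gammaFrm p Ψ hΨ)

theorem MLFrm.flat {Φ : Type} (K : Kripke Φ) (φ : MLFrm Φ) :
    ∀ T : Set K.W, MLFrm.sat K φ T ↔ ∀ w ∈ T, MLFrm.psat K φ w := by
  induction φ with
  | atom p => intro T; rfl
  | natom p =>
    intro T
    simp only [MLFrm.sat, MLFrm.psat, Set.eq_empty_iff_forall_notMem, Set.mem_inter_iff, not_and]
  | and φ ψ ih1 ih2 =>
    intro T
    simp only [MLFrm.sat, MLFrm.psat, ih1, ih2]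
    exact ⟨fun h w hw => ⟨h.1 w hw, h.2 w hw⟩,
      fun h => ⟨fun w hw => (h w hw).1, fun w hw => (h w hw).2⟩⟩
  | or φ ψ ih1 ih2 =>
    intro T
    simp only [MLFrm.sat, MLFrm.psat, ih1, ih2]
    constructor
    · rintro ⟨T₁, T₂, rfl, h1, h2⟩ w (hw | hw)
      · exact Or.inl (h1 w hw)
      · exact Or.inr (h2 w hw)
    · intro h
      refine ⟨{w | w ∈ T ∧ MLFrm.psat K φ w}, {w | w ∈ T ∧ MLFrm.psat K ψ w}, ?_,
        fun w hw => hw.2, fun w hw => hw.2⟩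
      ext w
      constructor
      · intro hw
        exact (h w hw).imp (fun h' => ⟨hw, h'⟩) (fun h' => ⟨hw, h'⟩)
      · rintro (hw | hw)
        · exact hw.1
        · exact hw.1
  | dia φ ih =>
    intro T
    simp only [MLFrm.sat, MLFrm.psat, ih]
    constructor
    · rintro ⟨S, ⟨_, h2⟩, h⟩ w hw
      obtain ⟨v, hv, hR⟩ := h2 hw
      exact ⟨v, hR, h v hv⟩
    · intro h
      refine ⟨{v | v ∈ K.img T ∧ MLFrm.psat K φ v}, ⟨fun v hv => hv.1, ?_⟩, fun v hv => hv.2⟩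
      intro w hw
      obtain ⟨v, hR, hv⟩ := h w hw
      exact ⟨v, ⟨⟨w, hw, hR⟩, hv⟩, hR⟩
  | box φ ih =>
    intro T
    simp only [MLFrm.sat, MLFrm.psat, ih]
    exact ⟨fun h w hw v hR => h v ⟨w, hw, hR⟩, fun h v ⟨w, hw, hR⟩ => h w hw v hR⟩

theorem sat_foldr {Φ : Type} (K : Kripke Φ) (p : Φ) (T : Set K.W) (l : List (MLFrm Φ)) :
    EMDL.sat K ((l.map fun ψ => EMDL.dep [] ψ).foldr EMDL.and
      (EMDL.or (EMDL.atom p) (EMDL.natom p))) T ↔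
    ∀ ψ ∈ l, ∀ w ∈ T, ∀ v ∈ T, (MLFrm.psat K ψ w ↔ MLFrm.psat K ψ v) := by
  induction l with
  | nil =>
    simp only [List.map_nil, List.foldr_nil, EMDL.sat, List.not_mem_nil, false_imp_iff,
      implies_true, iff_true]
    refine ⟨T ∩ K.V p, T \ K.V p, (Set.inter_union_sdiff T _).symm, Set.inter_subset_right, ?_⟩
    ext w
    simp
  | cons a l ih =>
    simp only [List.map_cons, List.foldr_cons, EMDL.sat, List.forall_mem_cons, ih, MLFrm.flat]
    simp

theorem sat_gamma {Φ : Type} (Ψ : Set (MLFrm Φ)) (hΨ : Ψ.Finite) (p : Φ)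
    (K : Kripke Φ) (T : Set K.W) :
    EMDL.sat K (gammaFrm p Ψ hΨ) T ↔
      ∀ w ∈ T, ∀ v ∈ T, typeSet K Ψ w = typeSet K Ψ v := by
  unfold gammaFrm
  rw [sat_foldr]
  simp only [Finset.mem_toList, Set.Finite.mem_toFinset]
  constructor
  · intro h w hw v hv
    ext ψ
    exact and_congr_right fun hψ => h ψ hψ w hw v hv
  · intro h ψ hψ w hw v hv
    have := Set.ext_iff.1 (h w hw v hv) ψ
    simpa [typeSet, hψ] using this

theorem tset_finite {Φ : Type} (Ψ : Set (MLFrm Φ)) (hΨ : Ψ.Finite)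
    (K : Kripke Φ) (T : Set K.W) : (tset K Ψ T).Finite := by
  refine hΨ.finite_subsets.subset ?_
  rintro _ ⟨w, _, rfl⟩ ψ hψ
  exact hψ.1

/-- For every `k`, every Kripke model `K` over `Φ` and every team `T`,
`K,T ⊨ γᵏ` iff `|tset_Ψ(K,T)| ≤ k`. -/
theorem gamma_counts_types {Φ : Type} (Ψ : Set (MLFrm Φ)) (hΨ : Ψ.Finite) (p : Φ)
    (k : ℕ) (K : Kripke Φ) (T : Set K.W) :
    EMDL.sat K (gammaPow p Ψ hΨ k) T ↔ (tset K Ψ T).ncard ≤ k := by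
  induction k generalizing T with
  | zero =>
    rw [Nat.le_zero, Set.ncard_eq_zero (tset_finite Ψ hΨ K T)]
    simp only [gammaPow, EMDL.sat, tset, Set.image_eq_empty]
    constructor
    · rintro ⟨h1, h2⟩
      rwa [Set.inter_eq_left.2 h1] at h2
    · rintro rfl
      simp
  | succ k ih =>
    simp only [gammaPow, EMDL.sat, ih, sat_gamma]
    constructor
    · rintro ⟨T₁, T₂, rfl, h1, h2⟩
      have e : tset K Ψ (T₁ ∪ T₂) = tset K Ψ T₁ ∪ tset K Ψ T₂ := Set.image_union _ _ _
      rw [e]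
      refine (Set.ncard_union_le _ _).trans (Nat.add_le_add h1 ?_)
      rw [Set.ncard_le_one (tset_finite Ψ hΨ K T₂)]
      rintro _ ⟨w, hw, rfl⟩ _ ⟨v, hv, rfl⟩
      exact h2 w hw v hv
    · intro h
      rcases T.eq_empty_or_nonempty with rfl | ⟨a, ha⟩
      · exact ⟨∅, ∅, by simp, by simp [tset], by simp⟩
      · refine ⟨{w | w ∈ T ∧ typeSet K Ψ w ≠ typeSet K Ψ a},
          {w | w ∈ T ∧ typeSet K Ψ w = typeSet K Ψ a}, ?_, ?_, ?_⟩
        · ext w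
          simp only [Set.mem_union, Set.mem_setOf_eq]
          tauto
        · have hlt : (tset K Ψ {w | w ∈ T ∧ typeSet K Ψ w ≠ typeSet K Ψ a}).ncard
              < (tset K Ψ T).ncard := by
            refine Set.ncard_lt_ncard ?_ (tset_finite Ψ hΨ K T)
            refine (Set.ssubset_iff_of_subset (Set.image_mono fun w hw => hw.1)).2
              ⟨typeSet K Ψ a, ⟨a, ha, rfl⟩, ?_⟩
            rintro ⟨w, hw, e⟩
            exact hw.2 e
          omega
        · intro w hw v hv
          exact hw.2.trans hv.2.symm

end MDLTeam
end

section
/- Let Ψ be a finite set of ML(Φ)-formulas and assume Φ is nonempty. Then for every Kripke model K over Φ and every nonempty team T of K there is a formula ξ_{K,T} ∈ EMDL(Φ) such that for every Kripke model K' over Φ and every team T' of K': K',T' ⊨ ξ_{K,T} if and only if tset_Ψ(K,T) ⊄ tset_Ψ(K',T'). -/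
namespace MDLTeam

section Helpers

variable {Φ : Type}

theorem flat_or {W : Type} (P Q : W → Prop) (T : Set W) :
    (∃ T₁ T₂, T = T₁ ∪ T₂ ∧ (∀ w ∈ T₁, P w) ∧ (∀ w ∈ T₂, Q w)) ↔ ∀ w ∈ T, P w ∨ Q w := by
  constructor
  · rintro ⟨T₁, T₂, rfl, h1, h2⟩ w (hw | hw)
    · exact Or.inl (h1 w hw)
    · exact Or.inr (h2 w hw)
  · intro h
    refine ⟨{w ∈ T | P w}, {w ∈ T | Q w}, ?_, fun w hw => hw.2, fun w hw => hw.2⟩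
    ext w
    constructor
    · intro hw
      rcases h w hw with h | h
      · exact Or.inl ⟨hw, h⟩
      · exact Or.inr ⟨hw, h⟩
    · rintro (hw | hw) <;> exact hw.1

theorem flat_dia (K : Kripke Φ) (P : K.W → Prop) (T : Set K.W) :
    (∃ S, K.trs T S ∧ (∀ w ∈ S, P w)) ↔ ∀ w ∈ T, ∃ v, K.R w v ∧ P v := by
  constructor
  · rintro ⟨S, ⟨_, h2⟩, hS⟩ w hw
    obtain ⟨v, hv, hr⟩ := h2 hw
    exact ⟨v, hr, hS v hv⟩
  · intro h
    refine ⟨{v ∈ K.img T | P v}, ⟨fun v hv => hv.1, ?_⟩, fun v hv => hv.2⟩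
    intro w hw
    obtain ⟨v, hr, hv⟩ := h w hw
    exact ⟨v, ⟨⟨w, hw, hr⟩, hv⟩, hr⟩

theorem flat_box (K : Kripke Φ) (P : K.W → Prop) (T : Set K.W) :
    (∀ w ∈ K.img T, P w) ↔ ∀ w ∈ T, ∀ v, K.R w v → P v := by
  constructor
  · intro h w hw v hr
    exact h v ⟨w, hw, hr⟩
  · rintro h v ⟨w, hw, hr⟩
    exact h w hw v hr

theorem flat_natom {W : Type} (V T : Set W) : T ∩ V = ∅ ↔ ∀ w ∈ T, w ∉ V := by
  rw [← Set.disjoint_iff_inter_eq_empty, Set.disjoint_left]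

theorem ml_flat (K : Kripke Φ) (φ : MLFrm Φ) (T : Set K.W) :
    MLFrm.sat K φ T ↔ ∀ w ∈ T, MLFrm.psat K φ w := by
  induction φ generalizing T with
  | atom p => exact Iff.rfl
  | natom p => exact flat_natom _ _
  | and φ ψ h1 h2 =>
    simp only [MLFrm.sat, MLFrm.psat, h1, h2]
    exact ⟨fun h w hw => ⟨h.1 w hw, h.2 w hw⟩,
      fun h => ⟨fun w hw => (h w hw).1, fun w hw => (h w hw).2⟩⟩
  | or φ ψ h1 h2 =>
    simp only [MLFrm.sat, MLFrm.psat, h1, h2]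
    exact flat_or _ _ _
  | dia φ h1 =>
    simp only [MLFrm.sat, MLFrm.psat, h1]
    exact flat_dia _ _ _
  | box φ h1 =>
    simp only [MLFrm.sat, MLFrm.psat, h1]
    exact flat_box _ _ _

/-- Team properties definable in `EMDL`. -/
def TDef (Q : ∀ K : Kripke Φ, Set K.W → Prop) : Prop :=
  ∃ ξ : EMDL Φ, ∀ (K : Kripke Φ) (T : Set K.W), EMDL.sat K ξ T ↔ Q K T

/-- State properties definable in `EMDL` by a flat formula. -/
def PDef (P : ∀ K : Kripke Φ, K.W → Prop) : Prop :=
  TDef fun K T => ∀ w ∈ T, P K w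

theorem TDef.and {Q Q' : ∀ K : Kripke Φ, Set K.W → Prop} (h : TDef Q) (h' : TDef Q') :
    TDef fun K T => Q K T ∧ Q' K T := by
  obtain ⟨a, ha⟩ := h
  obtain ⟨b, hb⟩ := h'
  refine ⟨.and a b, fun K T => ?_⟩
  simp only [EMDL.sat, ha, hb]

theorem TDef.or {Q Q' : ∀ K : Kripke Φ, Set K.W → Prop} (h : TDef Q) (h' : TDef Q') :
    TDef fun K T => ∃ T₁ T₂, T = T₁ ∪ T₂ ∧ Q K T₁ ∧ Q' K T₂ := by
  obtain ⟨a, ha⟩ := h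
  obtain ⟨b, hb⟩ := h'
  refine ⟨.or a b, fun K T => ?_⟩
  simp only [EMDL.sat, ha, hb]

theorem TDef.congr {Q Q' : ∀ K : Kripke Φ, Set K.W → Prop} (h : TDef Q)
    (e : ∀ K T, Q K T ↔ Q' K T) : TDef Q' := by
  obtain ⟨a, ha⟩ := h
  exact ⟨a, fun K T => (ha K T).trans (e K T)⟩

theorem PDef.and {P P' : ∀ K : Kripke Φ, K.W → Prop} (h : PDef P) (h' : PDef P') :
    PDef fun K w => P K w ∧ P' K w :=
  (TDef.and h h').congr fun _ _ => ⟨fun h w hw => ⟨h.1 w hw, h.2 w hw⟩,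
      fun h => ⟨fun w hw => (h w hw).1, fun w hw => (h w hw).2⟩⟩

theorem PDef.or {P P' : ∀ K : Kripke Φ, K.W → Prop} (h : PDef P) (h' : PDef P') :
    PDef fun K w => P K w ∨ P' K w :=
  (TDef.or h h').congr fun _ _ => flat_or _ _ _

theorem PDef.dia {P : ∀ K : Kripke Φ, K.W → Prop} (h : PDef P) :
    PDef fun K w => ∃ v, K.R w v ∧ P K v := by
  obtain ⟨a, ha⟩ := h
  refine ⟨.dia a, fun K T => ?_⟩
  simp only [EMDL.sat, ha]
  exact flat_dia _ _ _

theorem PDef.box {P : ∀ K : Kripke Φ, K.W → Prop} (h : PDef P) :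
    PDef fun K w => ∀ v, K.R w v → P K v := by
  obtain ⟨a, ha⟩ := h
  refine ⟨.box a, fun K T => ?_⟩
  simp only [EMDL.sat, ha]
  exact flat_box _ _ _

theorem PDef.atom (p : Φ) : PDef fun K w => w ∈ K.V p :=
  ⟨.atom p, fun _ _ => Iff.rfl⟩

theorem PDef.natom (p : Φ) : PDef fun K w => w ∉ K.V p :=
  ⟨.natom p, fun _ _ => flat_natom _ _⟩

theorem PDef.congr {Q Q' : ∀ K : Kripke Φ, K.W → Prop} (h : PDef Q)
    (e : ∀ K w, Q K w ↔ Q' K w) : PDef Q' :=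
  TDef.congr h fun K _ => forall₂_congr fun w _ => e K w

theorem PDef.ml (φ : MLFrm Φ) :
    (PDef fun K w => MLFrm.psat K φ w) ∧ PDef fun K w => ¬ MLFrm.psat K φ w := by
  induction φ with
  | atom p => exact ⟨PDef.atom p, PDef.natom p⟩
  | natom p => exact ⟨PDef.natom p, (PDef.atom p).congr fun _ _ => by simp [MLFrm.psat]⟩
  | and φ ψ h1 h2 =>
    exact ⟨h1.1.and h2.1, (h1.2.or h2.2).congr fun _ _ => by simp only [MLFrm.psat]; tauto⟩
  | or φ ψ h1 h2 =>
    exact ⟨h1.1.or h2.1, (h1.2.and h2.2).congr fun _ _ => by simp only [MLFrm.psat]; tauto⟩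
  | dia φ h =>
    exact ⟨h.1.dia, h.2.box.congr fun _ _ => by simp [MLFrm.psat]⟩
  | box φ h =>
    exact ⟨h.1.box, h.2.dia.congr fun _ _ => by simp [MLFrm.psat]⟩

theorem PDef.false [Nonempty Φ] : PDef fun (K : Kripke Φ) (_ : K.W) => False := by
  obtain ⟨p⟩ := ‹Nonempty Φ›
  exact ((PDef.atom p).and (PDef.natom p)).congr fun _ _ => by tauto

theorem PDef.true [Nonempty Φ] : PDef fun (K : Kripke Φ) (_ : K.W) => True := by
  obtain ⟨p⟩ := ‹Nonempty Φ›
  exact ((PDef.atom p).or (PDef.natom p)).congr fun _ _ => by tauto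

theorem TDef.ball [Nonempty Φ] {ι : Type*} {s : Set ι} (hs : s.Finite)
    (Q : ι → ∀ K : Kripke Φ, Set K.W → Prop) (h : ∀ i ∈ s, TDef (Q i)) :
    TDef fun K T => ∀ i ∈ s, Q i K T := by
  induction s, hs using Set.Finite.induction_on with
  | empty => exact TDef.congr PDef.true fun _ _ => by simp
  | insert _ _ ih =>
    exact ((h _ (Set.mem_insert _ _)).and
      (ih fun i hi => h i (Set.mem_insert_of_mem _ hi))).congr fun _ _ => by simp

theorem PDef.bex [Nonempty Φ] {ι : Type*} {s : Set ι} (hs : s.Finite)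
    (Q : ι → ∀ K : Kripke Φ, K.W → Prop) (h : ∀ i ∈ s, PDef (Q i)) :
    PDef fun K w => ∃ i ∈ s, Q i K w := by
  induction s, hs using Set.Finite.induction_on with
  | empty => exact PDef.congr PDef.false fun _ _ => by simp
  | insert _ _ ih =>
    exact ((h _ (Set.mem_insert _ _)).or
      (ih fun i hi => h i (Set.mem_insert_of_mem _ hi))).congr fun _ _ => by simp

theorem typeSet_eq_iff (K : Kripke Φ) {Ψ γ : Set (MLFrm Φ)} (hγ : γ ⊆ Ψ) (w : K.W) :
    typeSet K Ψ w = γ ↔ ∀ ψ ∈ Ψ, (MLFrm.psat K ψ w ↔ ψ ∈ γ) := by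
  constructor
  · rintro rfl ψ hψ
    exact ⟨fun h => ⟨hψ, h⟩, fun h => h.2⟩
  · intro h
    ext ψ
    exact ⟨fun hp => (h ψ hp.1).1 hp.2, fun hp => ⟨hγ hp, (h ψ (hγ hp)).2 hp⟩⟩

theorem PDef.typeNe [Nonempty Φ] {Ψ : Set (MLFrm Φ)} (hΨ : Ψ.Finite) {γ : Set (MLFrm Φ)}
    (hγ : γ ⊆ Ψ) : PDef fun K w => typeSet K Ψ w ≠ γ := by
  refine (PDef.bex hΨ (fun ψ K w => ¬ (MLFrm.psat K ψ w ↔ ψ ∈ γ)) ?_).congr fun K w => ?_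
  · intro ψ _
    by_cases h : ψ ∈ γ
    · exact (PDef.ml ψ).2.congr fun K w => by simp [h]
    · exact (PDef.ml ψ).1.congr fun K w => by simp [h]
  · rw [Ne, typeSet_eq_iff K hγ w]
    push Not
    rfl

theorem TDef.const [Nonempty Φ] {Ψ : Set (MLFrm Φ)} (hΨ : Ψ.Finite) :
    TDef fun K T => ∀ w ∈ T, ∀ v ∈ T, typeSet K Ψ w = typeSet K Ψ v := by
  refine (TDef.ball hΨ (fun ψ K T => EMDL.sat K (.dep [] ψ) T)
    (fun ψ _ => ⟨.dep [] ψ, fun _ _ => Iff.rfl⟩)).congr fun K T => ?_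
  simp only [EMDL.sat, ml_flat]
  constructor
  · intro h w hw v hv
    rw [typeSet_eq_iff K (fun _ h => h.1)]
    intro ψ hψ
    have := h ψ hψ w hw v hv (by simp)
    simp only [Set.mem_singleton_iff, forall_eq] at this
    exact this.trans ⟨fun h => ⟨hψ, h⟩, fun h => h.2⟩
  · intro h ψ hψ w hw v hv _
    simp only [Set.mem_singleton_iff, forall_eq]
    have := (typeSet_eq_iff K (fun _ h => h.1) w).1 (h w hw v hv) ψ hψ
    exact this.trans ⟨fun h => h.2, fun h => ⟨hψ, h⟩⟩

theorem TDef.atMost [Nonempty Φ] {Ψ : Set (MLFrm Φ)} (hΨ : Ψ.Finite) (n : ℕ) :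
    TDef fun K T => ∃ C : Set (Set (MLFrm Φ)), C.encard ≤ n ∧ ∀ w ∈ T, typeSet K Ψ w ∈ C := by
  induction n with
  | zero => exact TDef.congr PDef.false fun _ _ => by simp
  | succ n ih =>
    refine (ih.or (TDef.const hΨ)).congr fun K T => ?_
    constructor
    · rintro ⟨T₁, T₂, rfl, ⟨C, hC, h1⟩, h2⟩
      rcases T₂.eq_empty_or_nonempty with rfl | ⟨v, hv⟩
      · refine ⟨C, hC.trans (by exact_mod_cast Nat.le_succ n), by simpa using h1⟩
      · refine ⟨insert (typeSet K Ψ v) C, (Set.encard_insert_le _ _).trans ?_, ?_⟩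
        · push_cast
          gcongr
        · rintro w (hw | hw)
          · exact Or.inr (h1 w hw)
          · exact Or.inl (h2 w hw v hv)
    · rintro ⟨C, hC, h⟩
      rcases C.eq_empty_or_nonempty with rfl | ⟨a, ha⟩
      · exact ⟨T, ∅, by simp, ⟨∅, by simp, h⟩, by simp⟩
      · refine ⟨{w ∈ T | typeSet K Ψ w ≠ a}, {w ∈ T | typeSet K Ψ w = a}, ?_,
          ⟨C \ {a}, ?_, fun w hw => ⟨h w hw.1, hw.2⟩⟩, fun w hw v hv => hw.2.trans hv.2.symm⟩
        · ext w
          simp only [Set.mem_union, Set.mem_setOf_eq]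
          tauto
        · have := Set.encard_diff_singleton_add_one ha
          rw [← this] at hC
          push_cast at hC
          exact (ENat.add_le_add_iff_right ENat.one_ne_top).1 hC

end Helpers

/-- For a finite set `Ψ` of `ML(Φ)`-formulas (`Φ` nonempty), every Kripke
model `K` over `Φ` and every nonempty team `T` of `K`, there is `ξ_{K,T} ∈ EMDL(Φ)` such that
`K',T' ⊨ ξ_{K,T}` iff `tset_Ψ(K,T) ⊄ tset_Ψ(K',T')`. -/
theorem exists_nonsubset_formula {Φ : Type} [Nonempty Φ]
    (Ψ : Set (MLFrm Φ)) (hΨ : Ψ.Finite)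
    (K : Kripke Φ) (T : Set K.W) (hT : T.Nonempty) :
    ∃ ξ : EMDL Φ, ∀ (K' : Kripke Φ) (T' : Set K'.W),
      EMDL.sat K' ξ T' ↔ ¬ (tset K Ψ T ⊆ tset K' Ψ T') := by
  classical
  have hsub : ∀ γ ∈ tset K Ψ T, γ ⊆ Ψ := by
    rintro _ ⟨w, _, rfl⟩ ψ h
    exact h.1
  have hfin : (tset K Ψ T).Finite := hΨ.finite_subsets.subset hsub
  have hne : (tset K Ψ T).Nonempty := hT.image _
  generalize tset K Ψ T = Γ at hsub hfin hne
  have hpos : 0 < Γ.ncard := (Set.ncard_pos hfin).2 hne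
  obtain ⟨n, hn⟩ : ∃ n, Γ.ncard = n + 1 := ⟨Γ.ncard - 1, by omega⟩
  have hcard : Γ.encard = (n : ℕ∞) + 1 := by
    rw [← hfin.cast_ncard_eq, hn]
    push_cast
    rfl
  have h1 := TDef.ball hfin (fun γ K' T' => ∀ w ∈ T', typeSet K' Ψ w ≠ γ)
    (fun γ hγ => PDef.typeNe hΨ (hsub γ hγ))
  refine (h1.or (TDef.atMost hΨ n)).congr fun K' T' => ?_
  constructor
  · rintro ⟨T₁, T₂, rfl, h1, C, hC, h2⟩ hss
    have hΓC : Γ ⊆ C := by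
      intro γ hγ
      obtain ⟨w, hw | hw, rfl⟩ := hss hγ
      · exact absurd rfl (h1 _ hγ w hw)
      · exact h2 w hw
    have h3 := (Set.encard_le_encard hΓC).trans hC
    rw [hcard] at h3
    have : n + 1 ≤ n := by exact_mod_cast h3
    omega
  · intro hss
    obtain ⟨γ, hγ, hγ'⟩ := Set.not_subset.1 hss
    refine ⟨{w ∈ T' | typeSet K' Ψ w ∉ Γ}, {w ∈ T' | typeSet K' Ψ w ∈ Γ}, ?_, ?_,
      Γ \ {γ}, ?_, ?_⟩
    · ext w
      simp only [Set.mem_union, Set.mem_setOf_eq]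
      tauto
    · rintro δ hδ w hw rfl
      exact hw.2 hδ
    · have := Set.encard_diff_singleton_add_one hγ
      rw [hcard] at this
      exact (ENat.add_le_add_iff_right ENat.one_ne_top).1 this.le
    · intro w hw
      exact ⟨hw.2, fun h => hγ' ⟨w, hw.1, h⟩⟩

end MDLTeam
end

section
/- Every formula of ML(⊻)(Φ) is equivalent (over all Kripke models with teams) to a formula of the form ⊻Ψ, where Ψ is a finite set of ML(Φ)-formulas and ⊻Ψ denotes the intuitionistic disjunction of the members of Ψ: for every φ ∈ ML(⊻)(Φ) there is a finite set Ψ of ML(Φ)-formulas such that for every Kripke model K over Φ and team T of K, K,T ⊨ φ if and only if K,T ⊨ ψ for some ψ ∈ Ψ. -/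
namespace MDLTeam

/-- Every `ML(⊻)(Φ)`-formula is equivalent to an intuitionistic disjunction
`⊻Ψ` of a finite set `Ψ` of `ML(Φ)`-formulas. -/
theorem mli_normal_form {Φ : Type} (φ : MLI Φ) :
    ∃ Ψ : Set (MLFrm Φ), Ψ.Finite ∧
      ∀ (K : Kripke Φ) (T : Set K.W),
        MLI.sat K φ T ↔ ∃ ψ ∈ Ψ, MLFrm.sat K ψ T := by
  induction φ with
  | atom p =>
    exact ⟨{.atom p}, Set.finite_singleton _, fun K T => by simp [MLI.sat, MLFrm.sat]⟩
  | natom p =>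
    exact ⟨{.natom p}, Set.finite_singleton _, fun K T => by simp [MLI.sat, MLFrm.sat]⟩
  | and φ ψ ih₁ ih₂ =>
    obtain ⟨A, hA, h₁⟩ := ih₁
    obtain ⟨B, hB, h₂⟩ := ih₂
    refine ⟨Set.image2 MLFrm.and A B, hA.image2 _ hB, fun K T => ?_⟩
    rw [Set.exists_mem_image2]
    simp only [MLI.sat, MLFrm.sat, h₁, h₂]
    constructor
    · rintro ⟨⟨a, ha, sa⟩, b, hb, sb⟩
      exact ⟨a, ha, b, hb, sa, sb⟩
    · rintro ⟨a, ha, b, hb, sa, sb⟩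
      exact ⟨⟨a, ha, sa⟩, b, hb, sb⟩
  | or φ ψ ih₁ ih₂ =>
    obtain ⟨A, hA, h₁⟩ := ih₁
    obtain ⟨B, hB, h₂⟩ := ih₂
    refine ⟨Set.image2 MLFrm.or A B, hA.image2 _ hB, fun K T => ?_⟩
    rw [Set.exists_mem_image2]
    simp only [MLI.sat, MLFrm.sat, h₁, h₂]
    constructor
    · rintro ⟨T₁, T₂, hT, ⟨a, ha, sa⟩, b, hb, sb⟩
      exact ⟨a, ha, b, hb, T₁, T₂, hT, sa, sb⟩
    · rintro ⟨a, ha, b, hb, T₁, T₂, hT, sa, sb⟩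
      exact ⟨T₁, T₂, hT, ⟨a, ha, sa⟩, b, hb, sb⟩
  | dia φ ih =>
    obtain ⟨A, hA, h⟩ := ih
    refine ⟨Set.image MLFrm.dia A, hA.image _, fun K T => ?_⟩
    rw [Set.exists_mem_image]
    simp only [MLI.sat, MLFrm.sat, h]
    constructor
    · rintro ⟨S, hS, a, ha, sa⟩
      exact ⟨a, ha, S, hS, sa⟩
    · rintro ⟨a, ha, S, hS, sa⟩
      exact ⟨S, hS, a, ha, sa⟩
  | box φ ih =>
    obtain ⟨A, hA, h⟩ := ih
    refine ⟨Set.image MLFrm.box A, hA.image _, fun K T => ?_⟩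
    rw [Set.exists_mem_image]
    simp only [MLI.sat, MLFrm.sat, h]
  | idis φ ψ ih₁ ih₂ =>
    obtain ⟨A, hA, h₁⟩ := ih₁
    obtain ⟨B, hB, h₂⟩ := ih₂
    refine ⟨A ∪ B, hA.union hB, fun K T => ?_⟩
    simp only [MLI.sat, h₁, h₂, Set.mem_union, or_and_right, exists_or]

end MDLTeam
end

section
/- For every formula φ ∈ ML(⊻)(Φ) there exists m ∈ ℕ such that for every Kripke model K over Φ: M(φ,K) is finite with |M(φ,K)| ≤ m, and M(φ,K) generates ‖φ‖^K, i.e., every team T with K,T ⊨ φ is contained in some maximal team S ∈ M(φ,K). In particular, the upper dimension Dim(φ) is well-defined. -/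
namespace MDLTeam

/-- Every `ML(⊻)`-formula is satisfied exactly by the subteams of finitely many teams, where the
finite index type depends on the formula only. -/
theorem MLI.exists_generators {Φ : Type} (φ : MLI Φ) :
    ∃ (ι : Type) (_ : Fintype ι), ∀ K : Kripke Φ, ∃ f : ι → Set K.W,
      ∀ T : Set K.W, MLI.sat K φ T ↔ ∃ i, T ⊆ f i := by
  induction φ with
  | atom p => exact ⟨Unit, inferInstance, fun K => ⟨fun _ => K.V p, fun T => by simp [MLI.sat]⟩⟩
  | natom p =>
    refine ⟨Unit, inferInstance, fun K => ⟨fun _ => (K.V p)ᶜ, fun T => ?_⟩⟩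
    simp [MLI.sat, Set.subset_compl_iff_disjoint_right, Set.disjoint_iff_inter_eq_empty]
  | and φ ψ ih₁ ih₂ =>
    obtain ⟨ι, _, h₁⟩ := ih₁
    obtain ⟨κ, _, h₂⟩ := ih₂
    refine ⟨ι × κ, inferInstance, fun K => ?_⟩
    obtain ⟨f, hf⟩ := h₁ K
    obtain ⟨g, hg⟩ := h₂ K
    refine ⟨fun x => f x.1 ∩ g x.2, fun T => ?_⟩
    simp [MLI.sat, hf, hg]
  | or φ ψ ih₁ ih₂ =>
    obtain ⟨ι, _, h₁⟩ := ih₁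
    obtain ⟨κ, _, h₂⟩ := ih₂
    refine ⟨ι × κ, inferInstance, fun K => ?_⟩
    obtain ⟨f, hf⟩ := h₁ K
    obtain ⟨g, hg⟩ := h₂ K
    refine ⟨fun x => f x.1 ∪ g x.2, fun T => ?_⟩
    simp only [MLI.sat, hf, hg]
    constructor
    · rintro ⟨T₁, T₂, rfl, ⟨i, hi⟩, ⟨j, hj⟩⟩
      exact ⟨(i, j), Set.union_subset_union hi hj⟩
    · rintro ⟨⟨i, j⟩, h⟩
      refine ⟨T ∩ f i, T ∩ g j, ?_, ⟨i, Set.inter_subset_right⟩, ⟨j, Set.inter_subset_right⟩⟩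
      rw [← Set.inter_union_distrib_left]
      exact (Set.inter_eq_left.2 h).symm
  | dia φ ih =>
    obtain ⟨ι, _, h₁⟩ := ih
    refine ⟨ι, inferInstance, fun K => ?_⟩
    obtain ⟨f, hf⟩ := h₁ K
    refine ⟨fun i => K.pre (f i), fun T => ?_⟩
    simp only [MLI.sat, hf]
    constructor
    · rintro ⟨S, ⟨-, h⟩, i, hi⟩
      refine ⟨i, fun w hw => ?_⟩
      obtain ⟨v, hv, hr⟩ := h hw
      exact ⟨v, hi hv, hr⟩
    · rintro ⟨i, h⟩
      refine ⟨K.img T ∩ f i, ⟨Set.inter_subset_left, fun w hw => ?_⟩, i, Set.inter_subset_right⟩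
      obtain ⟨v, hv, hr⟩ := h hw
      exact ⟨v, ⟨⟨w, hw, hr⟩, hv⟩, hr⟩
  | box φ ih =>
    obtain ⟨ι, _, h₁⟩ := ih
    refine ⟨ι, inferInstance, fun K => ?_⟩
    obtain ⟨f, hf⟩ := h₁ K
    refine ⟨fun i => {w | ∀ v, K.R w v → v ∈ f i}, fun T => ?_⟩
    simp only [MLI.sat, hf]
    refine exists_congr fun i => ⟨fun h w hw v hr => h ⟨w, hw, hr⟩, ?_⟩
    rintro h v ⟨w, hw, hr⟩
    exact h hw v hr
  | idis φ ψ ih₁ ih₂ =>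
    obtain ⟨ι, _, h₁⟩ := ih₁
    obtain ⟨κ, _, h₂⟩ := ih₂
    refine ⟨ι ⊕ κ, inferInstance, fun K => ?_⟩
    obtain ⟨f, hf⟩ := h₁ K
    obtain ⟨g, hg⟩ := h₂ K
    exact ⟨Sum.elim f g, fun T => by simp [MLI.sat, hf, hg]⟩

/-- For every `φ ∈ ML(⊻)(Φ)` there is `m` such that for every Kripke model `K`,
`M(φ,K)` is finite with `|M(φ,K)| ≤ m` and `M(φ,K)` generates `‖φ‖^K`; in particular the
upper dimension `Dim(φ)` is well-defined. -/
theorem dim_well_defined {Φ : Type} (φ : MLI Φ) :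
    ∃ m : ℕ, ∀ K : Kripke Φ,
      (MLI.Mset K φ).Finite ∧ (MLI.Mset K φ).ncard ≤ m ∧
      ∀ T : Set K.W, MLI.sat K φ T → ∃ S ∈ MLI.Mset K φ, T ⊆ S := by
  obtain ⟨ι, _, h⟩ := MLI.exists_generators φ
  refine ⟨Fintype.card ι, fun K => ?_⟩
  obtain ⟨f, hf⟩ := h K
  have hsat : ∀ i, MLI.sat K φ (f i) := fun i => (hf _).2 ⟨i, subset_rfl⟩
  have hsub : MLI.Mset K φ ⊆ Set.range f := by
    rintro T ⟨hT, hmax⟩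
    obtain ⟨i, hi⟩ := (hf T).1 hT
    exact ⟨i, hmax _ (hsat i) hi⟩
  have hfin : (Set.range f).Finite := Set.finite_range f
  refine ⟨hfin.subset hsub, (Set.ncard_le_ncard hsub hfin).trans ?_, fun T hT => ?_⟩
  · rw [← Set.image_univ, ← Nat.card_eq_fintype_card, ← Set.ncard_univ]
    exact Set.ncard_image_le Set.finite_univ
  · obtain ⟨i, hi⟩ := (hf T).1 hT
    obtain ⟨S, hS, hmax⟩ := hfin.exists_le_maximal (Set.mem_range_self i)
    obtain ⟨j, rfl⟩ := hmax.prop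
    refine ⟨f j, ⟨hsat j, fun U hU hjU => ?_⟩, hi.trans hS⟩
    obtain ⟨k, hk⟩ := (hf U).1 hU
    exact (hk.trans (hmax.le_of_ge (Set.mem_range_self k) (hjU.trans hk))).antisymm hjU

end MDLTeam
end

section
/- For all formulas φ, ψ ∈ ML(⊻)(Φ) the upper dimension satisfies: Dim(p) = Dim(¬p) = 1 for p ∈ Φ; Dim(φ∧ψ) ≤ Dim(φ)·Dim(ψ); Dim(φ∨ψ) ≤ Dim(φ)·Dim(ψ); Dim(φ⊻ψ) ≤ Dim(φ) + Dim(ψ); Dim(◇φ) ≤ Dim(φ); and Dim(□φ) ≤ Dim(φ). -/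
namespace MDLTeam

/-- `φ` has, in every model, at most `m` teams generating its downward closed family. -/
def Bd {Φ : Type} (φ : MLI Φ) (m : ℕ) : Prop :=
  ∀ K : Kripke Φ, ∃ C : Set (Set K.W), C.Finite ∧ C.ncard ≤ m ∧
    ∀ T, MLI.sat K φ T ↔ ∃ U ∈ C, T ⊆ U

theorem mset_sub {Φ : Type} {φ : MLI Φ} {K : Kripke Φ} {C : Set (Set K.W)}
    (h : ∀ T, MLI.sat K φ T ↔ ∃ U ∈ C, T ⊆ U) : MLI.Mset K φ ⊆ C := by
  rintro T ⟨hT, hm⟩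
  obtain ⟨U, hU, hTU⟩ := (h T).1 hT
  have := hm U ((h U).2 ⟨U, hU, subset_rfl⟩) hTU
  exact this ▸ hU

theorem dim_mem {Φ : Type} {φ : MLI Φ} {m : ℕ} (h : Bd φ m) :
    m ∈ {m : ℕ | ∀ K : Kripke Φ, (MLI.Mset K φ).Finite ∧ (MLI.Mset K φ).ncard ≤ m} := by
  intro K
  obtain ⟨C, hf, hc, hC⟩ := h K
  exact ⟨hf.subset (mset_sub hC), (Set.ncard_le_ncard (mset_sub hC) hf).trans hc⟩

theorem dim_le {Φ : Type} {φ : MLI Φ} {m : ℕ} (h : Bd φ m) : MLI.Dim φ ≤ m :=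
  Nat.sInf_le (dim_mem h)

theorem bd_dim_of {Φ : Type} {φ : MLI Φ} {m : ℕ} (h : Bd φ m) : Bd φ (MLI.Dim φ) := by
  intro K
  have hd := Nat.sInf_mem (Set.nonempty_of_mem (dim_mem h)) K
  refine ⟨MLI.Mset K φ, hd.1, hd.2, fun T => ?_⟩
  obtain ⟨C, hf, -, hC⟩ := h K
  constructor
  · intro hT
    obtain ⟨U, hU, hTU⟩ := (hC T).1 hT
    obtain ⟨M, hUM, hM⟩ := hf.exists_le_maximal hU
    refine ⟨M, ⟨(hC M).2 ⟨M, hM.1, subset_rfl⟩, ?_⟩, hTU.trans hUM⟩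
    intro S hS hMS
    obtain ⟨S', hS', hSS'⟩ := (hC S).1 hS
    exact Set.Subset.antisymm (hSS'.trans (hM.2 hS' (hMS.trans hSS'))) hMS
  · rintro ⟨U, hU, hTU⟩
    obtain ⟨U', hU', h'⟩ := (hC U).1 hU.1
    exact (hC T).2 ⟨U', hU', hTU.trans h'⟩

theorem bd_atom {Φ : Type} (p : Φ) : Bd (MLI.atom p) 1 := fun K =>
  ⟨{K.V p}, Set.finite_singleton _, by simp, fun T => by simp [MLI.sat]⟩

theorem bd_natom {Φ : Type} (p : Φ) : Bd (MLI.natom p) 1 := fun K =>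
  ⟨{(K.V p)ᶜ}, Set.finite_singleton _, by simp, fun T => by
    simp [MLI.sat, Set.subset_compl_iff_disjoint_right, Set.disjoint_iff_inter_eq_empty]⟩

theorem ncard_image2_le {α : Type} {A B : Set α} (f : α → α → α) {m n : ℕ}
    (hA : A.Finite) (hB : B.Finite) (hm : A.ncard ≤ m) (hn : B.ncard ≤ n) :
    (Set.image2 f A B).ncard ≤ m * n := by
  rw [← Set.image_prod]
  refine (Set.ncard_image_le (hA.prod hB)).trans ?_
  rw [Set.ncard_prod]
  exact Nat.mul_le_mul hm hn

theorem bd_and {Φ : Type} {φ ψ : MLI Φ} {m n : ℕ} (h1 : Bd φ m) (h2 : Bd ψ n) :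
    Bd (MLI.and φ ψ) (m * n) := by
  intro K
  obtain ⟨A, hA, hAm, hAT⟩ := h1 K
  obtain ⟨B, hB, hBn, hBT⟩ := h2 K
  refine ⟨Set.image2 (· ∩ ·) A B, hA.image2 _ hB, ncard_image2_le _ hA hB hAm hBn, fun T => ?_⟩
  simp only [MLI.sat, hAT, hBT, Set.mem_image2]
  constructor
  · rintro ⟨⟨U, hU, h⟩, ⟨V, hV, h'⟩⟩
    exact ⟨_, ⟨U, hU, V, hV, rfl⟩, Set.subset_inter h h'⟩
  · rintro ⟨_, ⟨U, hU, V, hV, rfl⟩, h⟩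
    exact ⟨⟨U, hU, fun x hx => (h hx).1⟩, ⟨V, hV, fun x hx => (h hx).2⟩⟩

theorem bd_or {Φ : Type} {φ ψ : MLI Φ} {m n : ℕ} (h1 : Bd φ m) (h2 : Bd ψ n) :
    Bd (MLI.or φ ψ) (m * n) := by
  intro K
  obtain ⟨A, hA, hAm, hAT⟩ := h1 K
  obtain ⟨B, hB, hBn, hBT⟩ := h2 K
  refine ⟨Set.image2 (· ∪ ·) A B, hA.image2 _ hB, ncard_image2_le _ hA hB hAm hBn, fun T => ?_⟩
  simp only [MLI.sat, hAT, hBT, Set.mem_image2]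
  constructor
  · rintro ⟨T₁, T₂, rfl, ⟨U, hU, h⟩, ⟨V, hV, h'⟩⟩
    exact ⟨_, ⟨U, hU, V, hV, rfl⟩, Set.union_subset_union h h'⟩
  · rintro ⟨_, ⟨U, hU, V, hV, rfl⟩, h⟩
    refine ⟨T ∩ U, T ∩ V, ?_, ⟨U, hU, Set.inter_subset_right⟩, ⟨V, hV, Set.inter_subset_right⟩⟩
    rw [← Set.inter_union_distrib_left]
    exact (Set.inter_eq_left.2 h).symm

theorem bd_idis {Φ : Type} {φ ψ : MLI Φ} {m n : ℕ} (h1 : Bd φ m) (h2 : Bd ψ n) :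
    Bd (MLI.idis φ ψ) (m + n) := by
  intro K
  obtain ⟨A, hA, hAm, hAT⟩ := h1 K
  obtain ⟨B, hB, hBn, hBT⟩ := h2 K
  refine ⟨A ∪ B, hA.union hB, (Set.ncard_union_le A B).trans (Nat.add_le_add hAm hBn), fun T => ?_⟩
  simp only [MLI.sat, hAT, hBT, Set.mem_union, or_and_right, exists_or]

theorem bd_dia {Φ : Type} {φ : MLI Φ} {m : ℕ} (h1 : Bd φ m) : Bd (MLI.dia φ) m := by
  intro K
  obtain ⟨A, hA, hAm, hAT⟩ := h1 K
  refine ⟨K.pre '' A, hA.image _, (Set.ncard_image_le hA).trans hAm, fun T => ?_⟩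
  simp only [MLI.sat, hAT, Set.mem_image]
  constructor
  · rintro ⟨S, hS, U, hU, hSU⟩
    refine ⟨_, ⟨U, hU, rfl⟩, fun w hw => ?_⟩
    obtain ⟨v, hv, hr⟩ := hS.2 hw
    exact ⟨v, hSU hv, hr⟩
  · rintro ⟨_, ⟨U, hU, rfl⟩, h⟩
    refine ⟨K.img T ∩ U, ⟨Set.inter_subset_left, fun w hw => ?_⟩, U, hU, Set.inter_subset_right⟩
    obtain ⟨v, hv, hr⟩ := h hw
    exact ⟨v, ⟨⟨w, hw, hr⟩, hv⟩, hr⟩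

theorem bd_box {Φ : Type} {φ : MLI Φ} {m : ℕ} (h1 : Bd φ m) : Bd (MLI.box φ) m := by
  intro K
  obtain ⟨A, hA, hAm, hAT⟩ := h1 K
  refine ⟨(fun U => {w | ∀ v, K.R w v → v ∈ U}) '' A, hA.image _,
    (Set.ncard_image_le hA).trans hAm, fun T => ?_⟩
  simp only [MLI.sat, hAT, Set.mem_image]
  constructor
  · rintro ⟨U, hU, h⟩
    exact ⟨_, ⟨U, hU, rfl⟩, fun w hw v hr => h ⟨w, hw, hr⟩⟩
  · rintro ⟨_, ⟨U, hU, rfl⟩, h⟩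
    exact ⟨U, hU, fun v ⟨w, hw, hr⟩ => h hw v hr⟩

theorem exists_bd {Φ : Type} (φ : MLI Φ) : ∃ m, Bd φ m := by
  induction φ with
  | atom p => exact ⟨_, bd_atom p⟩
  | natom p => exact ⟨_, bd_natom p⟩
  | and φ ψ h1 h2 => exact ⟨_, bd_and h1.choose_spec h2.choose_spec⟩
  | or φ ψ h1 h2 => exact ⟨_, bd_or h1.choose_spec h2.choose_spec⟩
  | idis φ ψ h1 h2 => exact ⟨_, bd_idis h1.choose_spec h2.choose_spec⟩
  | dia φ h => exact ⟨_, bd_dia h.choose_spec⟩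
  | box φ h => exact ⟨_, bd_box h.choose_spec⟩

theorem bd_dim {Φ : Type} (φ : MLI Φ) : Bd φ (MLI.Dim φ) :=
  bd_dim_of (exists_bd φ).choose_spec

theorem dim_pos {Φ : Type} (φ : MLI Φ) (h : ∀ K : Kripke Φ, MLI.sat K φ ∅) : 1 ≤ MLI.Dim φ := by
  by_contra hlt
  have h0 : MLI.Dim φ = 0 := by omega
  let K : Kripke Φ := ⟨Unit, fun _ _ => False, fun _ => ∅⟩
  obtain ⟨C, hf, hc, hC⟩ := bd_dim φ K
  obtain ⟨U, hU, -⟩ := (hC ∅).1 (h K)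
  rw [h0] at hc
  have := (Set.ncard_pos hf).2 ⟨U, hU⟩
  omega

/-- Estimates for the upper dimension of `ML(⊻)`-formulas. -/
theorem dim_estimates {Φ : Type} :
    (∀ p : Φ, MLI.Dim (MLI.atom p) = 1 ∧ MLI.Dim (MLI.natom p) = 1) ∧
    (∀ φ ψ : MLI Φ,
      MLI.Dim (MLI.and φ ψ) ≤ MLI.Dim φ * MLI.Dim ψ ∧
      MLI.Dim (MLI.or φ ψ) ≤ MLI.Dim φ * MLI.Dim ψ ∧
      MLI.Dim (MLI.idis φ ψ) ≤ MLI.Dim φ + MLI.Dim ψ) ∧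
    (∀ φ : MLI Φ, MLI.Dim (MLI.dia φ) ≤ MLI.Dim φ ∧ MLI.Dim (MLI.box φ) ≤ MLI.Dim φ) := by
  refine ⟨fun p => ⟨le_antisymm (dim_le (bd_atom p)) (dim_pos _ fun K => by simp [MLI.sat]),
    le_antisymm (dim_le (bd_natom p)) (dim_pos _ fun K => by simp [MLI.sat])⟩,
    fun φ ψ => ⟨dim_le (bd_and (bd_dim φ) (bd_dim ψ)), dim_le (bd_or (bd_dim φ) (bd_dim ψ)),
      dim_le (bd_idis (bd_dim φ) (bd_dim ψ))⟩,
    fun φ => ⟨dim_le (bd_dia (bd_dim φ)), dim_le (bd_box (bd_dim φ))⟩⟩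

end MDLTeam
end

section
/- For every formula φ ∈ ML(⊻)(Φ), every Kripke model K over Φ, and every team U of K that is minimal (under inclusion) with the property K,U ⊭ φ, we have |U| ≤ Dim(φ). Consequently, the lower dimension satisfies dim(φ) ≤ Dim(φ). -/
namespace MDLTeam

theorem MLI.sat_empty {Φ : Type} (K : Kripke Φ) (φ : MLI Φ) : MLI.sat K φ ∅ := by
  have himg : K.img ∅ = ∅ := by simp [Kripke.img]
  induction φ with
  | atom p => simp [MLI.sat]
  | natom p => simp [MLI.sat]
  | and φ ψ h1 h2 => exact ⟨h1, h2⟩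
  | or φ ψ h1 h2 => exact ⟨∅, ∅, by simp, h1, h2⟩
  | dia φ h => exact ⟨∅, ⟨Set.empty_subset _, Set.empty_subset _⟩, h⟩
  | box φ h => simpa [MLI.sat, himg] using h
  | idis φ ψ h1 h2 => exact Or.inl h1

/-- Every formula is, uniformly in the model, determined by a finite family of generating teams. -/
theorem MLI.exists_family {Φ : Type} (φ : MLI Φ) :
    ∃ (ι : Type), Finite ι ∧ ∀ K : Kripke Φ, ∃ F : ι → Set K.W,
      ∀ T, MLI.sat K φ T ↔ ∃ i, T ⊆ F i := by
  induction φ with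
  | atom p =>
    exact ⟨Unit, inferInstance, fun K => ⟨fun _ => K.V p, fun T => by simp [MLI.sat]⟩⟩
  | natom p =>
    refine ⟨Unit, inferInstance, fun K => ⟨fun _ => (K.V p)ᶜ, fun T => ?_⟩⟩
    simp [MLI.sat, Set.subset_compl_iff_disjoint_right, Set.disjoint_iff_inter_eq_empty]
  | and φ ψ ih1 ih2 =>
    obtain ⟨ι, hι, h1⟩ := ih1
    obtain ⟨κ, hκ, h2⟩ := ih2
    refine ⟨ι × κ, inferInstance, fun K => ?_⟩
    obtain ⟨F, hF⟩ := h1 K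
    obtain ⟨G, hG⟩ := h2 K
    refine ⟨fun x => F x.1 ∩ G x.2, fun T => ?_⟩
    simp [MLI.sat, hF, hG]
  | or φ ψ ih1 ih2 =>
    obtain ⟨ι, hι, h1⟩ := ih1
    obtain ⟨κ, hκ, h2⟩ := ih2
    refine ⟨ι × κ, inferInstance, fun K => ?_⟩
    obtain ⟨F, hF⟩ := h1 K
    obtain ⟨G, hG⟩ := h2 K
    refine ⟨fun x => F x.1 ∪ G x.2, fun T => ?_⟩
    simp only [MLI.sat, hF, hG]
    constructor
    · rintro ⟨T₁, T₂, rfl, ⟨i, hi⟩, ⟨j, hj⟩⟩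
      exact ⟨(i, j), Set.union_subset_union hi hj⟩
    · rintro ⟨⟨i, j⟩, h⟩
      refine ⟨T ∩ F i, T ∩ G j, ?_, ⟨i, Set.inter_subset_right⟩, ⟨j, Set.inter_subset_right⟩⟩
      rw [← Set.inter_union_distrib_left]
      exact (Set.inter_eq_left.2 h).symm
  | dia φ ih =>
    obtain ⟨ι, hι, h1⟩ := ih
    refine ⟨ι, hι, fun K => ?_⟩
    obtain ⟨F, hF⟩ := h1 K
    refine ⟨fun i => K.pre (F i), fun T => ?_⟩
    simp only [MLI.sat, hF]
    constructor
    · rintro ⟨S, ⟨_, h2⟩, i, hi⟩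
      refine ⟨i, fun w hw => ?_⟩
      obtain ⟨v, hv, hr⟩ := h2 hw
      exact ⟨v, hi hv, hr⟩
    · rintro ⟨i, h⟩
      refine ⟨F i ∩ K.img T, ⟨Set.inter_subset_right, fun w hw => ?_⟩, i, Set.inter_subset_left⟩
      obtain ⟨v, hv, hr⟩ := h hw
      exact ⟨v, ⟨hv, w, hw, hr⟩, hr⟩
  | box φ ih =>
    obtain ⟨ι, hι, h1⟩ := ih
    refine ⟨ι, hι, fun K => ?_⟩
    obtain ⟨F, hF⟩ := h1 K
    refine ⟨fun i => {w | ∀ v, K.R w v → v ∈ F i}, fun T => ?_⟩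
    simp only [MLI.sat, hF]
    constructor
    · rintro ⟨i, hi⟩
      exact ⟨i, fun w hw v hr => hi ⟨w, hw, hr⟩⟩
    · rintro ⟨i, h⟩
      exact ⟨i, fun v ⟨w, hw, hr⟩ => h hw v hr⟩
  | idis φ ψ ih1 ih2 =>
    obtain ⟨ι, hι, h1⟩ := ih1
    obtain ⟨κ, hκ, h2⟩ := ih2
    refine ⟨ι ⊕ κ, inferInstance, fun K => ?_⟩
    obtain ⟨F, hF⟩ := h1 K
    obtain ⟨G, hG⟩ := h2 K
    refine ⟨Sum.elim F G, fun T => ?_⟩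
    simp [MLI.sat, hF, hG]

theorem MLI.Mset_subset_range {Φ : Type} {φ : MLI Φ} {K : Kripke Φ} {ι : Type}
    {F : ι → Set K.W} (hF : ∀ T, MLI.sat K φ T ↔ ∃ i, T ⊆ F i) :
    MLI.Mset K φ ⊆ Set.range F := by
  rintro T ⟨hT, hmax⟩
  obtain ⟨i, hi⟩ := (hF T).1 hT
  exact ⟨i, hmax _ ((hF _).2 ⟨i, subset_rfl⟩) hi⟩

theorem MLI.Dim_spec {Φ : Type} (φ : MLI Φ) (K : Kripke Φ) :
    (MLI.Mset K φ).Finite ∧ (MLI.Mset K φ).ncard ≤ MLI.Dim φ := by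
  have hne : {m : ℕ | ∀ K : Kripke Φ,
      (MLI.Mset K φ).Finite ∧ (MLI.Mset K φ).ncard ≤ m}.Nonempty := by
    obtain ⟨ι, hι, h⟩ := MLI.exists_family φ
    refine ⟨Nat.card ι, fun K => ?_⟩
    obtain ⟨F, hF⟩ := h K
    have hs := MLI.Mset_subset_range hF
    refine ⟨(Set.finite_range F).subset hs, (Set.ncard_le_ncard hs (Set.finite_range F)).trans ?_⟩
    rw [← Set.image_univ, ← Set.ncard_univ]
    exact Set.ncard_image_le Set.finite_univ
  exact Nat.sInf_mem hne K

theorem MLI.exists_max {Φ : Type} (φ : MLI Φ) (K : Kripke Φ) (T : Set K.W)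
    (hT : MLI.sat K φ T) : ∃ S ∈ MLI.Mset K φ, T ⊆ S := by
  obtain ⟨ι, hι, h⟩ := MLI.exists_family φ
  obtain ⟨F, hF⟩ := h K
  obtain ⟨i, hi⟩ := (hF T).1 hT
  obtain ⟨S, hiS, hS⟩ := (Set.finite_range F).exists_le_maximal ⟨i, rfl⟩
  refine ⟨S, ⟨?_, fun S' hS' hle => ?_⟩, hi.trans hiS⟩
  · obtain ⟨j, rfl⟩ := hS.1
    exact (hF _).2 ⟨j, subset_rfl⟩
  · obtain ⟨j, hj⟩ := (hF S').1 hS'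
    exact (hj.trans (hS.2 ⟨j, rfl⟩ (hle.trans hj))).antisymm hle

theorem MLI.Nset_bound {Φ : Type} (φ : MLI Φ) (K : Kripke Φ) (U : Set K.W)
    (hU : U ∈ MLI.Nset K φ) : U.Finite ∧ U.ncard ≤ MLI.Dim φ := by
  obtain ⟨hfin, hcard⟩ := MLI.Dim_spec φ K
  obtain ⟨hns, hmin⟩ := hU
  obtain ⟨ι, hι, h⟩ := MLI.exists_family φ
  obtain ⟨F, hF⟩ := h K
  have hne : U.Nonempty := by
    rw [Set.nonempty_iff_ne_empty]
    rintro rfl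
    exact hns (MLI.sat_empty K φ)
  have hex : ∀ S : Set K.W, ∃ u, S ∈ MLI.Mset K φ → u ∈ U ∧ u ∉ S := by
    intro S
    by_cases hS : S ∈ MLI.Mset K φ
    · have : ¬ U ⊆ S := fun hUS => by
        obtain ⟨i, hi⟩ := (hF S).1 hS.1
        exact hns ((hF U).2 ⟨i, hUS.trans hi⟩)
      obtain ⟨u, hu⟩ := Set.not_subset.1 this
      exact ⟨u, fun _ => hu⟩
    · exact ⟨hne.some, fun h => absurd h hS⟩
  choose f hf using hex
  have himg : f '' MLI.Mset K φ = U := by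
    apply hmin
    · intro hs
      obtain ⟨S, hS, hsub⟩ := MLI.exists_max φ K _ hs
      exact (hf S hS).2 (hsub ⟨S, hS, rfl⟩)
    · rintro _ ⟨S, hS, rfl⟩
      exact (hf S hS).1
  rw [← himg]
  exact ⟨hfin.image f, (Set.ncard_image_le hfin).trans hcard⟩

/-- Every team `U` minimal with `K,U ⊭ φ` satisfies `|U| ≤ Dim(φ)`;
consequently `dim(φ) ≤ Dim(φ)`. -/
theorem ldim_le_dim {Φ : Type} (φ : MLI Φ) :
    (∀ (K : Kripke Φ), ∀ U ∈ MLI.Nset K φ, U.Finite ∧ U.ncard ≤ MLI.Dim φ) ∧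
    MLI.ldim φ ≤ MLI.Dim φ := by
  have hb : ∀ (K : Kripke Φ), ∀ U ∈ MLI.Nset K φ, U.Finite ∧ U.ncard ≤ MLI.Dim φ :=
    fun K U hU => MLI.Nset_bound φ K U hU
  exact ⟨hb, Nat.sInf_le hb⟩

end MDLTeam
end

section
/- For every dependence atom dep(ψ₁,…,ψₙ,θ) of EMDL(Φ) and every Kripke model K over Φ, |M(dep(ψ₁,…,ψₙ,θ),K)| ≤ 2^(2^n); hence Dim(dep(ψ₁,…,ψₙ,θ)) ≤ 2^(2^n). Moreover, if ψ₁,…,ψₙ and θ are n+1 distinct proposition symbols, then Dim(dep(ψ₁,…,ψₙ,θ)) = 2^(2^n), i.e., there is a Kripke model K over Φ with |M(dep(ψ₁,…,ψₙ,θ),K)| = 2^(2^n). -/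
namespace MDLTeam

/-- The candidate maximal team attached to a Boolean function of types. -/
def fteam {Φ : Type} {n : ℕ} (K : Kripke Φ) (ψs : Fin n → MLFrm Φ) (θ : MLFrm Φ)
    (F : (Fin n → Prop) → Prop) : Set K.W :=
  {w | MLFrm.sat K θ {w} ↔ F (fun i => MLFrm.sat K (ψs i) {w})}

theorem sat_dep_iff {Φ : Type} {n : ℕ} (K : Kripke Φ) (ψs : Fin n → MLFrm Φ) (θ : MLFrm Φ)
    (T : Set K.W) : EMDL.sat K (EMDL.dep (List.ofFn ψs) θ) T ↔
      ∀ w ∈ T, ∀ v ∈ T, (∀ i, (MLFrm.sat K (ψs i) {w} ↔ MLFrm.sat K (ψs i) {v})) →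
        (MLFrm.sat K θ {w} ↔ MLFrm.sat K θ {v}) := by
  simp only [EMDL.sat, List.forall_mem_ofFn_iff]

theorem sat_fteam {Φ : Type} {n : ℕ} (K : Kripke Φ) (ψs : Fin n → MLFrm Φ) (θ : MLFrm Φ)
    (F : (Fin n → Prop) → Prop) :
    EMDL.sat K (EMDL.dep (List.ofFn ψs) θ) (fteam K ψs θ F) := by
  rw [sat_dep_iff]
  intro w hw v hv h
  have e : (fun i => MLFrm.sat K (ψs i) {w}) = (fun i => MLFrm.sat K (ψs i) {v}) :=
    funext fun i => propext (h i)
  simp only [fteam, Set.mem_setOf_eq] at hw hv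
  rw [hw, hv, e]

theorem Mset_subset {Φ : Type} {n : ℕ} (K : Kripke Φ) (ψs : Fin n → MLFrm Φ) (θ : MLFrm Φ) :
    EMDL.Mset K (EMDL.dep (List.ofFn ψs) θ) ⊆ fteam K ψs θ '' Set.univ := by
  rintro T ⟨hT, hmax⟩
  refine ⟨fun t => ∃ w ∈ T, (fun i => MLFrm.sat K (ψs i) {w}) = t ∧ MLFrm.sat K θ {w},
    trivial, hmax _ (sat_fteam K ψs θ _) ?_⟩
  intro w hw
  constructor
  · intro h
    exact ⟨w, hw, rfl, h⟩
  · rintro ⟨v, hv, e, h⟩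
    exact ((sat_dep_iff K ψs θ T).1 hT v hv w hw (fun i => iff_of_eq (congrFun e i))).1 h

theorem card_fun_prop (n : ℕ) :
    (Set.univ : Set ((Fin n → Prop) → Prop)).ncard = 2 ^ 2 ^ n := by
  rw [Set.ncard_univ, Nat.card_fun, Nat.card_fun]
  simp

theorem upper_bound {Φ : Type} {n : ℕ} (ψs : Fin n → MLFrm Φ) (θ : MLFrm Φ) (K : Kripke Φ) :
    (EMDL.Mset K (EMDL.dep (List.ofFn ψs) θ)).Finite ∧
      (EMDL.Mset K (EMDL.dep (List.ofFn ψs) θ)).ncard ≤ 2 ^ 2 ^ n := by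
  have hf : (fteam K ψs θ '' Set.univ).Finite := Set.toFinite _
  refine ⟨hf.subset (Mset_subset K ψs θ), ?_⟩
  calc _ ≤ (fteam K ψs θ '' Set.univ).ncard := Set.ncard_le_ncard (Mset_subset K ψs θ) hf
    _ ≤ _ := Set.ncard_image_le (Set.toFinite _)
    _ = _ := card_fun_prop n

/-- The model whose worlds are all truth assignments to `ps` and `q`. -/
def fullModel {Φ : Type} {n : ℕ} (ps : Fin n → Φ) (q : Φ) : Kripke Φ where
  W := (Fin n → Prop) × Prop
  R := fun _ _ => False
  V := fun p => {w | (∃ i, p = ps i ∧ w.1 i) ∨ (p = q ∧ w.2)}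

theorem full_ncard {Φ : Type} {n : ℕ} (ps : Fin n → Φ) (q : Φ) (hps : Function.Injective ps)
    (hq : ∀ i, ps i ≠ q) :
    (EMDL.Mset (fullModel ps q) (EMDL.dep (List.ofFn fun i => MLFrm.atom (ps i))
      (MLFrm.atom q))).ncard = 2 ^ 2 ^ n := by
  have h1 : ∀ (w : (Fin n → Prop) × Prop) (i : Fin n),
      MLFrm.sat (fullModel ps q) (MLFrm.atom (ps i)) {w} ↔ w.1 i := by
    intro w i
    simp only [MLFrm.sat]
    refine Set.singleton_subset_iff.trans ⟨?_, fun h => Or.inl ⟨i, rfl, h⟩⟩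
    rintro (⟨j, e, h⟩ | ⟨e, h⟩)
    · rw [hps e]; exact h
    · exact absurd e (hq i)
  have h2 : ∀ (w : (Fin n → Prop) × Prop),
      MLFrm.sat (fullModel ps q) (MLFrm.atom q) {w} ↔ w.2 := by
    intro w
    simp only [MLFrm.sat]
    refine Set.singleton_subset_iff.trans ⟨?_, fun h => Or.inr ⟨rfl, h⟩⟩
    rintro (⟨j, e, h⟩ | ⟨e, h⟩)
    · exact absurd e.symm (hq j)
    · exact h
  have hmem : ∀ (F : (Fin n → Prop) → Prop) (w : (Fin n → Prop) × Prop),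
      w ∈ fteam (fullModel ps q) (fun i => MLFrm.atom (ps i)) (MLFrm.atom q) F ↔
        (w.2 ↔ F w.1) := by
    intro F w
    have e : (fun i => MLFrm.sat (fullModel ps q) (MLFrm.atom (ps i)) {w}) = w.1 :=
      funext fun i => propext (h1 w i)
    change (MLFrm.sat (fullModel ps q) (MLFrm.atom q) {w} ↔
      F (fun i => MLFrm.sat (fullModel ps q) (MLFrm.atom (ps i)) {w})) ↔ _
    rw [e, h2]
  have heq : EMDL.Mset (fullModel ps q) (EMDL.dep (List.ofFn fun i => MLFrm.atom (ps i))
      (MLFrm.atom q)) =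
      fteam (fullModel ps q) (fun i => MLFrm.atom (ps i)) (MLFrm.atom q) '' Set.univ := by
    refine Set.Subset.antisymm (Mset_subset _ _ _) ?_
    rintro _ ⟨F, -, rfl⟩
    refine ⟨sat_fteam _ _ _ F, fun S hS hsub => Set.Subset.antisymm ?_ hsub⟩
    intro w hw
    refine (hmem F w).2 ?_
    have hv := hsub ((hmem F (w.1, F w.1)).2 Iff.rfl)
    have := (sat_dep_iff _ _ _ S).1 hS w hw _ hv (fun i => (h1 w i).trans (h1 (w.1, F w.1) i).symm)
    exact (h2 w).symm.trans (this.trans (h2 _))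
  rw [heq, Set.ncard_image_of_injective, card_fun_prop]
  intro F G h
  funext t
  have a : (t, F t) ∈ fteam (fullModel ps q) (fun i => MLFrm.atom (ps i)) (MLFrm.atom q) G :=
    h ▸ (hmem F (t, F t)).2 Iff.rfl
  exact propext ((hmem G (t, F t)).1 a)

/-- For every dependence atom `dep(ψ₁,…,ψₙ,θ)` of `EMDL(Φ)` and Kripke model
`K`, `|M(dep(ψ₁,…,ψₙ,θ),K)| ≤ 2^(2^n)`, hence `Dim(dep(ψ₁,…,ψₙ,θ)) ≤ 2^(2^n)`; moreover,
if `ψ₁,…,ψₙ,θ` are `n+1` distinct proposition symbols then equality holds, witnessed by a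
Kripke model with `2^(2^n)` maximal teams. -/
theorem dep_atom_dimension {Φ : Type} (n : ℕ) :
    (∀ (ψs : Fin n → MLFrm Φ) (θ : MLFrm Φ) (K : Kripke Φ),
      (EMDL.Mset K (EMDL.dep (List.ofFn ψs) θ)).Finite ∧
      (EMDL.Mset K (EMDL.dep (List.ofFn ψs) θ)).ncard ≤ 2 ^ 2 ^ n) ∧
    (∀ (ψs : Fin n → MLFrm Φ) (θ : MLFrm Φ),
      EMDL.Dim (EMDL.dep (List.ofFn ψs) θ) ≤ 2 ^ 2 ^ n) ∧
    (∀ (ps : Fin n → Φ) (q : Φ), Function.Injective ps → (∀ i, ps i ≠ q) →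
      EMDL.Dim (EMDL.dep (List.ofFn fun i => MLFrm.atom (ps i)) (MLFrm.atom q)) = 2 ^ 2 ^ n ∧
      ∃ K : Kripke Φ,
        (EMDL.Mset K (EMDL.dep (List.ofFn fun i => MLFrm.atom (ps i)) (MLFrm.atom q))).Finite ∧
        (EMDL.Mset K (EMDL.dep (List.ofFn fun i => MLFrm.atom (ps i)) (MLFrm.atom q))).ncard
          = 2 ^ 2 ^ n) := by
  refine ⟨upper_bound, fun ψs θ => Nat.sInf_le (upper_bound ψs θ), fun ps q hps hq => ⟨?_, ?_⟩⟩
  · refine le_antisymm (Nat.sInf_le (upper_bound _ _)) ?_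
    refine le_csInf ⟨_, upper_bound _ _⟩ fun m hm => ?_
    have := (hm (fullModel ps q)).2
    rwa [full_ncard ps q hps hq] at this
  · exact ⟨fullModel ps q, (upper_bound _ _ _).1, full_ncard ps q hps hq⟩

end MDLTeam
end
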